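/- Let φ(x) be a formula of the correspondence language with at most the free variable x. Then φ(x) is logically equivalent to the (2,1)-standard x-translation ST_21(I,x) of some modal intuitionistic formula I if and only if there exists k ∈ ℕ such that φ(x) is invariant with respect to (2,1)-modal k-asimulations. -/

import Mathlib

namespace ModalIntAsim

/-- Binary relation symbols of the correspondence vocabulary: R, R_□, R_◇. -/
inductive RelSym : Type
  | r | box | diam
deriving DecidableEq

/-- Formulas of the correspondence language: classical first-order logic without
identity, with variables indexed by `ℕ`, unary predicate letters `P n` (n : ℕ),
and the three binary relation symbols. -/
inductive FOForm : Type
  | falsum : FOForm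
  | pred : ℕ → ℕ → FOForm            -- `pred n v` is `P_n(x_v)`
  | rel : RelSym → ℕ → ℕ → FOForm    -- `rel s v w` is `S(x_v, x_w)`
  | conj : FOForm → FOForm → FOForm
  | disj : FOForm → FOForm → FOForm
  | impl : FOForm → FOForm → FOForm
  | all : ℕ → FOForm → FOForm
  | ex : ℕ → FOForm → FOForm

namespace FOForm

/-- Free variables of a correspondence formula. -/
def freeVars : FOForm → Finset ℕ
  | falsum => ∅
  | pred _ v => {v}
  | rel _ v w => {v, w}
  | conj f g => f.freeVars ∪ g.freeVars
  | disj f g => f.freeVars ∪ g.freeVars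
  | impl f g => f.freeVars ∪ g.freeVars
  | all v f => f.freeVars \ {v}
  | ex v f => f.freeVars \ {v}

/-- The unary predicate letters occurring in a formula (the binary relation
symbols R, R_□, R_◇ are regarded as belonging to every vocabulary Σ_φ). -/
def predLetters : FOForm → Finset ℕ
  | falsum => ∅
  | pred n _ => {n}
  | rel _ _ _ => ∅
  | conj f g => f.predLetters ∪ g.predLetters
  | disj f g => f.predLetters ∪ g.predLetters
  | impl f g => f.predLetters ∪ g.predLetters
  | all _ f => f.predLetters
  | ex _ f => f.predLetters

/-- Degree of a formula: the greatest number of nested quantifiers. -/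
def degree : FOForm → ℕ
  | falsum => 0
  | pred _ _ => 0
  | rel _ _ _ => 0
  | conj f g => max f.degree g.degree
  | disj f g => max f.degree g.degree
  | impl f g => max f.degree g.degree
  | all _ f => f.degree + 1
  | ex _ f => f.degree + 1

end FOForm

/-- A model of the correspondence language: a domain together with
interpretations of R, R_□, R_◇ and of the unary predicate letters.
(A Θ-model only consults the letters in Θ.) -/
structure Model : Type 1 where
  U : Type
  rel : U → U → Prop
  relBox : U → U → Prop
  relDiam : U → U → Prop
  pred : ℕ → U → Prop

/-- Interpretation of a binary relation symbol in a model. -/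
def Model.relOf (M : Model) : RelSym → M.U → M.U → Prop
  | .r => M.rel
  | .box => M.relBox
  | .diam => M.relDiam

/-- Tarskian satisfaction of a formula in a model under an assignment. -/
def Sat (M : Model) : FOForm → (ℕ → M.U) → Prop
  | .falsum, _ => False
  | .pred n v, α => M.pred n (α v)
  | .rel s v w, α => M.relOf s (α v) (α w)
  | .conj f g, α => Sat M f α ∧ Sat M g α
  | .disj f g, α => Sat M f α ∨ Sat M g α
  | .impl f g, α => Sat M f α → Sat M g α
  | .all v f, α => ∀ u : M.U, Sat M f (Function.update α v u)
  | .ex v f, α => ∃ u : M.U, Sat M f (Function.update α v u)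

/-- `M, a ⊨ φ(x)`: φ is true in `M` under any assignment sending `x` to `a`. -/
def SatAt (M : Model) (a : M.U) (x : ℕ) (φ : FOForm) : Prop :=
  ∀ α : ℕ → M.U, α x = a → Sat M φ α

/-- Logical equivalence of correspondence formulas. -/
def Equiv (φ ψ : FOForm) : Prop :=
  ∀ (M : Model) (α : ℕ → M.U), Sat M φ α ↔ Sat M ψ α

/-- Logical entailment between correspondence formulas. -/
def Entails (φ ψ : FOForm) : Prop :=
  ∀ (M : Model) (α : ℕ → M.U), Sat M φ α → Sat M ψ α

/-- Modal intuitionistic formulas: built from propositional letters `p n`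
using ⊥, ∧, ∨, →, □, ◇. -/
inductive MForm : Type
  | bot : MForm
  | prop : ℕ → MForm
  | conj : MForm → MForm → MForm
  | disj : MForm → MForm → MForm
  | impl : MForm → MForm → MForm
  | box : MForm → MForm
  | diam : MForm → MForm

/-- The (i,j)-standard x-translation `ST_ij`.  `boxOne = true` means the box
clause (□₁) is used (i = 1), `boxOne = false` means (□₂) (i = 2); likewise
`diamOne = true` means the diamond clause (◇₁) (j = 1) and `diamOne = false`
means (◇₂) (j = 2).  Bound variables are chosen fresh as `x+1`, `x+2`. -/
def ST (boxOne diamOne : Bool) : MForm → ℕ → FOForm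
  | .bot, _ => .falsum
  | .prop n, x => .pred n x
  | .conj I J, x => .conj (ST boxOne diamOne I x) (ST boxOne diamOne J x)
  | .disj I J, x => .disj (ST boxOne diamOne I x) (ST boxOne diamOne J x)
  | .impl I J, x =>
      .all (x + 1) (.impl (.rel .r x (x + 1))
        (.impl (ST boxOne diamOne I (x + 1)) (ST boxOne diamOne J (x + 1))))
  | .box I, x =>
      if boxOne then
        .all (x + 1) (.impl (.rel .box x (x + 1)) (ST boxOne diamOne I (x + 1)))
      else
        .all (x + 1) (.impl (.rel .r x (x + 1))
          (.all (x + 2) (.impl (.rel .box (x + 1) (x + 2)) (ST boxOne diamOne I (x + 2)))))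
  | .diam I, x =>
      if diamOne then
        .ex (x + 1) (.conj (.rel .diam x (x + 1)) (ST boxOne diamOne I (x + 1)))
      else
        .all (x + 1) (.impl (.rel .r x (x + 1))
          (.ex (x + 2) (.conj (.rel .diam (x + 1) (x + 2)) (ST boxOne diamOne I (x + 2)))))

/-! ### Conditions on relations between tuples (the k-asimulation conditions).
A relation between the two models is represented by its two directed
components; `N` is the model of the source tuple and `P` that of the target
tuple.  A tuple `(ā_m, a)` is represented as the list `as ++ [a]`, with
`m = as.length`. -/

section TupleConds

variable (N P : Model)

/-- The "p-type" condition: related tuples are nonempty and of equal length. -/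
def TypeCond (A : List N.U → List P.U → Prop) : Prop :=
  ∀ as bs, A as bs → as ≠ [] ∧ as.length = bs.length

/-- (p-base). -/
def BaseCond (Θ : Set ℕ) (A : List N.U → List P.U → Prop) : Prop :=
  ∀ (as : List N.U) (bs : List P.U) (a : N.U) (b : P.U),
    A (as ++ [a]) (bs ++ [b]) → ∀ n ∈ Θ, N.pred n a → P.pred n b

/-- (p-step). -/
def StepCond (k : ℕ) (A : List N.U → List P.U → Prop)
    (Arev : List P.U → List N.U → Prop) : Prop :=
  ∀ (as : List N.U) (bs : List P.U) (a : N.U) (b d : P.U),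
    A (as ++ [a]) (bs ++ [b]) → P.rel b d → as.length < k →
    ∃ c : N.U, N.rel a c ∧ A (as ++ [a, c]) (bs ++ [b, d]) ∧
      Arev (bs ++ [b, d]) (as ++ [a, c])

/-- (p-box-1). -/
def Box1Cond (k : ℕ) (A : List N.U → List P.U → Prop) : Prop :=
  ∀ (as : List N.U) (bs : List P.U) (a : N.U) (b d : P.U),
    A (as ++ [a]) (bs ++ [b]) → P.relBox b d → as.length < k →
    ∃ c : N.U, N.relBox a c ∧ A (as ++ [a, c]) (bs ++ [b, d])

/-- (p-box-2). -/
def Box2Cond (k : ℕ) (A : List N.U → List P.U → Prop) : Prop :=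
  ∀ (as : List N.U) (bs : List P.U) (a : N.U) (b d f : P.U),
    A (as ++ [a]) (bs ++ [b]) → P.rel b d → P.relBox d f → as.length + 1 < k →
    ∃ c e : N.U, N.rel a c ∧ N.relBox c e ∧ A (as ++ [a, c, e]) (bs ++ [b, d, f])

/-- (p-diam-1). -/
def Diam1Cond (k : ℕ) (A : List N.U → List P.U → Prop) : Prop :=
  ∀ (as : List N.U) (bs : List P.U) (a c : N.U) (b : P.U),
    A (as ++ [a]) (bs ++ [b]) → N.relDiam a c → as.length < k →
    ∃ d : P.U, P.relDiam b d ∧ A (as ++ [a, c]) (bs ++ [b, d])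

/-- (p-diam-2(1)). -/
def Diam2aCond (k : ℕ) (A B : List N.U → List P.U → Prop) : Prop :=
  ∀ (as : List N.U) (bs : List P.U) (a : N.U) (b d : P.U),
    A (as ++ [a]) (bs ++ [b]) → P.rel b d → as.length + 1 < k →
    ∃ c : N.U, N.rel a c ∧ B (as ++ [a, c]) (bs ++ [b, d])

/-- (p-diam-2(2)). -/
def Diam2bCond (k : ℕ) (B A : List N.U → List P.U → Prop) : Prop :=
  ∀ (as : List N.U) (bs : List P.U) (a c : N.U) (b : P.U),
    B (as ++ [a]) (bs ++ [b]) → N.relDiam a c → as.length < k →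
    ∃ d : P.U, P.relDiam b d ∧ A (as ++ [a, c]) (bs ++ [b, d])

end TupleConds

/-- An (i,1)-modal ⟨(M₁,t),(M₂,u)⟩_k-asimulation (j = 1): a single relation `A`
given by its two directed components `A12`, `A21`. -/
def IsKAsimD1 (boxOne : Bool) (Θ : Set ℕ) (M₁ M₂ : Model) (t : M₁.U) (u : M₂.U) (k : ℕ)
    (A12 : List M₁.U → List M₂.U → Prop) (A21 : List M₂.U → List M₁.U → Prop) : Prop :=
  TypeCond M₁ M₂ A12 ∧ TypeCond M₂ M₁ A21 ∧
  A12 [t] [u] ∧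
  BaseCond M₁ M₂ Θ A12 ∧ BaseCond M₂ M₁ Θ A21 ∧
  StepCond M₁ M₂ k A12 A21 ∧ StepCond M₂ M₁ k A21 A12 ∧
  (if boxOne then Box1Cond M₁ M₂ k A12 ∧ Box1Cond M₂ M₁ k A21
   else Box2Cond M₁ M₂ k A12 ∧ Box2Cond M₂ M₁ k A21) ∧
  Diam1Cond M₁ M₂ k A12 ∧ Diam1Cond M₂ M₁ k A21

/-- An (i,2)-modal ⟨(M₁,t),(M₂,u)⟩_k-asimulation (j = 2): an ordered pair
(A, B) of relations, each given by its two directed components. -/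
def IsKAsimD2 (boxOne : Bool) (Θ : Set ℕ) (M₁ M₂ : Model) (t : M₁.U) (u : M₂.U) (k : ℕ)
    (A12 : List M₁.U → List M₂.U → Prop) (A21 : List M₂.U → List M₁.U → Prop)
    (B12 : List M₁.U → List M₂.U → Prop) (B21 : List M₂.U → List M₁.U → Prop) : Prop :=
  TypeCond M₁ M₂ A12 ∧ TypeCond M₂ M₁ A21 ∧
  TypeCond M₁ M₂ B12 ∧ TypeCond M₂ M₁ B21 ∧
  A12 [t] [u] ∧
  BaseCond M₁ M₂ Θ A12 ∧ BaseCond M₂ M₁ Θ A21 ∧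
  StepCond M₁ M₂ k A12 A21 ∧ StepCond M₂ M₁ k A21 A12 ∧
  (if boxOne then Box1Cond M₁ M₂ k A12 ∧ Box1Cond M₂ M₁ k A21
   else Box2Cond M₁ M₂ k A12 ∧ Box2Cond M₂ M₁ k A21) ∧
  Diam2aCond M₁ M₂ k A12 B12 ∧ Diam2aCond M₂ M₁ k A21 B21 ∧
  Diam2bCond M₁ M₂ k B12 A12 ∧ Diam2bCond M₂ M₁ k B21 A21

/-- φ(x) is invariant with respect to (i,1)-modal k-asimulations. -/
def KInvariantD1 (boxOne : Bool) (x : ℕ) (φ : FOForm) (k : ℕ) : Prop :=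
  ∀ Θ : Set ℕ, (φ.predLetters : Set ℕ) ⊆ Θ →
  ∀ (M₁ M₂ : Model) (t : M₁.U) (u : M₂.U)
    (A12 : List M₁.U → List M₂.U → Prop) (A21 : List M₂.U → List M₁.U → Prop),
    IsKAsimD1 boxOne Θ M₁ M₂ t u k A12 A21 →
    ∀ (a : M₁.U) (b : M₂.U), A12 [a] [b] → SatAt M₁ a x φ → SatAt M₂ b x φ

/-- φ(x) is invariant with respect to (i,2)-modal k-asimulations. -/
def KInvariantD2 (boxOne : Bool) (x : ℕ) (φ : FOForm) (k : ℕ) : Prop :=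
  ∀ Θ : Set ℕ, (φ.predLetters : Set ℕ) ⊆ Θ →
  ∀ (M₁ M₂ : Model) (t : M₁.U) (u : M₂.U)
    (A12 : List M₁.U → List M₂.U → Prop) (A21 : List M₂.U → List M₁.U → Prop)
    (B12 : List M₁.U → List M₂.U → Prop) (B21 : List M₂.U → List M₁.U → Prop),
    IsKAsimD2 boxOne Θ M₁ M₂ t u k A12 A21 B12 B21 →
    ∀ (a : M₁.U) (b : M₂.U), A12 [a] [b] → SatAt M₁ a x φ → SatAt M₂ b x φ

/-! ### Conditions for asimulations *simpliciter* (relations between elements). -/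

section ElemConds

variable (N P : Model)

/-- (base). -/
def BaseCondE (Θ : Set ℕ) (A : N.U → P.U → Prop) : Prop :=
  ∀ (a : N.U) (b : P.U), A a b → ∀ n ∈ Θ, N.pred n a → P.pred n b

/-- (step). -/
def StepCondE (A : N.U → P.U → Prop) (Arev : P.U → N.U → Prop) : Prop :=
  ∀ (a : N.U) (b d : P.U), A a b → P.rel b d →
    ∃ c : N.U, N.rel a c ∧ A c d ∧ Arev d c

/-- (box-1). -/
def Box1CondE (A : N.U → P.U → Prop) : Prop :=
  ∀ (a : N.U) (b d : P.U), A a b → P.relBox b d →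
    ∃ c : N.U, N.relBox a c ∧ A c d

/-- (box-2). -/
def Box2CondE (A : N.U → P.U → Prop) : Prop :=
  ∀ (a : N.U) (b d f : P.U), A a b → P.rel b d → P.relBox d f →
    ∃ c e : N.U, N.rel a c ∧ N.relBox c e ∧ A e f

/-- (diam-1). -/
def Diam1CondE (A : N.U → P.U → Prop) : Prop :=
  ∀ (a c : N.U) (b : P.U), A a b → N.relDiam a c →
    ∃ d : P.U, P.relDiam b d ∧ A c d

/-- (diam-2(1)). -/
def Diam2aCondE (A B : N.U → P.U → Prop) : Prop :=
  ∀ (a : N.U) (b d : P.U), A a b → P.rel b d →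
    ∃ c : N.U, N.rel a c ∧ B c d

/-- (diam-2(2)). -/
def Diam2bCondE (B A : N.U → P.U → Prop) : Prop :=
  ∀ (a c : N.U) (b : P.U), B a b → N.relDiam a c →
    ∃ d : P.U, P.relDiam b d ∧ A c d

end ElemConds

/-- An (i,1)-modal ⟨(M₁,t),(M₂,u)⟩-asimulation (j = 1). -/
def IsAsimD1 (boxOne : Bool) (Θ : Set ℕ) (M₁ M₂ : Model) (t : M₁.U) (u : M₂.U)
    (A12 : M₁.U → M₂.U → Prop) (A21 : M₂.U → M₁.U → Prop) : Prop :=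
  A12 t u ∧
  BaseCondE M₁ M₂ Θ A12 ∧ BaseCondE M₂ M₁ Θ A21 ∧
  StepCondE M₁ M₂ A12 A21 ∧ StepCondE M₂ M₁ A21 A12 ∧
  (if boxOne then Box1CondE M₁ M₂ A12 ∧ Box1CondE M₂ M₁ A21
   else Box2CondE M₁ M₂ A12 ∧ Box2CondE M₂ M₁ A21) ∧
  Diam1CondE M₁ M₂ A12 ∧ Diam1CondE M₂ M₁ A21

/-- An (i,2)-modal ⟨(M₁,t),(M₂,u)⟩-asimulation (j = 2). -/
def IsAsimD2 (boxOne : Bool) (Θ : Set ℕ) (M₁ M₂ : Model) (t : M₁.U) (u : M₂.U)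
    (A12 : M₁.U → M₂.U → Prop) (A21 : M₂.U → M₁.U → Prop)
    (B12 : M₁.U → M₂.U → Prop) (B21 : M₂.U → M₁.U → Prop) : Prop :=
  A12 t u ∧
  BaseCondE M₁ M₂ Θ A12 ∧ BaseCondE M₂ M₁ Θ A21 ∧
  StepCondE M₁ M₂ A12 A21 ∧ StepCondE M₂ M₁ A21 A12 ∧
  (if boxOne then Box1CondE M₁ M₂ A12 ∧ Box1CondE M₂ M₁ A21
   else Box2CondE M₁ M₂ A12 ∧ Box2CondE M₂ M₁ A21) ∧
  Diam2aCondE M₁ M₂ A12 B12 ∧ Diam2aCondE M₂ M₁ A21 B21 ∧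
  Diam2bCondE M₁ M₂ B12 A12 ∧ Diam2bCondE M₂ M₁ B21 A21

/-- φ(x) is invariant with respect to (i,1)-modal asimulations. -/
def InvariantD1 (boxOne : Bool) (x : ℕ) (φ : FOForm) : Prop :=
  ∀ Θ : Set ℕ, (φ.predLetters : Set ℕ) ⊆ Θ →
  ∀ (M₁ M₂ : Model) (t : M₁.U) (u : M₂.U)
    (A12 : M₁.U → M₂.U → Prop) (A21 : M₂.U → M₁.U → Prop),
    IsAsimD1 boxOne Θ M₁ M₂ t u A12 A21 →
    ∀ (a : M₁.U) (b : M₂.U), A12 a b → SatAt M₁ a x φ → SatAt M₂ b x φ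

/-- φ(x) is invariant with respect to (i,2)-modal asimulations. -/
def InvariantD2 (boxOne : Bool) (x : ℕ) (φ : FOForm) : Prop :=
  ∀ Θ : Set ℕ, (φ.predLetters : Set ℕ) ⊆ Θ →
  ∀ (M₁ M₂ : Model) (t : M₁.U) (u : M₂.U)
    (A12 : M₁.U → M₂.U → Prop) (A21 : M₂.U → M₁.U → Prop)
    (B12 : M₁.U → M₂.U → Prop) (B21 : M₂.U → M₁.U → Prop),
    IsAsimD2 boxOne Θ M₁ M₂ t u A12 A21 B12 B21 →
    ∀ (a : M₁.U) (b : M₂.U), A12 a b → SatAt M₁ a x φ → SatAt M₂ b x φ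

/-! ### Types, complete conjunctions, ω-saturation. -/

/-- `int(φ,x,l)`: the set of (2,2)-standard x-translations of modal
intuitionistic formulas which are (Σ_φ,x,l)-formulas. -/
def intSet (φ : FOForm) (x l : ℕ) : Set FOForm :=
  {ψ | (∃ I : MForm, ψ = ST false false I x) ∧
    ψ.predLetters ⊆ φ.predLetters ∧ ψ.freeVars ⊆ {x} ∧ ψ.degree ≤ l}

/-- `tp_l(φ(x),M,a)`. -/
def tpSet (φ : FOForm) (x l : ℕ) (M : Model) (a : M.U) : Set FOForm :=
  {ψ | ψ ∈ intSet φ x l ∧ SatAt M a x ψ}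

/-- Conjunction of a nonempty list of formulas. -/
def listConj : FOForm → List FOForm → FOForm
  | ψ, [] => ψ
  | ψ, χ :: L => FOForm.conj ψ (listConj χ L)

/-- Ψ(x) is a complete (φ,x,k)-conjunction. -/
def IsCompleteConj (φ : FOForm) (x k : ℕ) (Ψ : FOForm) : Prop :=
  (∃ (ψ₀ : FOForm) (L : List FOForm), ψ₀ ∈ intSet φ x k ∧
    (∀ χ ∈ L, χ ∈ intSet φ x k) ∧ Ψ = listConj ψ₀ L) ∧
  ∃ (M : Model) (a : M.U), SatAt M a x (FOForm.conj Ψ φ) ∧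
    ∀ ψ ∈ tpSet φ x k M a, Entails Ψ ψ

/-- `int_x(Θ)` for the (i,j)-standard translation. -/
def intX (Θ : Set ℕ) (boxOne diamOne : Bool) (x : ℕ) : Set FOForm :=
  {ψ | (∃ I : MForm, ψ = ST boxOne diamOne I x) ∧ (ψ.predLetters : Set ℕ) ⊆ Θ}

/-- `tp_x(M,t)` for the (i,j)-standard translation. -/
def tpX (Θ : Set ℕ) (boxOne diamOne : Bool) (x : ℕ) (M : Model) (t : M.U) : Set FOForm :=
  {ψ | ψ ∈ intX Θ boxOne diamOne x ∧ SatAt M t x ψ}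

/-- `imp_x(M,t) = ⋂ { t̄p_x(M,u) : t R_◇ u }` (for the (2,2)-translation). -/
def impX (Θ : Set ℕ) (x : ℕ) (M : Model) (t : M.U) : Set FOForm :=
  {ψ | ψ ∈ intX Θ false false x ∧ ∀ u : M.U, M.relDiam t u → ¬ SatAt M u x ψ}

/-- ω-saturation: for every finite tuple of parameters (the first `n` values of
an assignment `α`) and every set `Γ` of formulas with finitely many free
variables beyond the parameters, if `Γ` is consistent with the first-order
theory of `[M,ā]` (i.e. satisfiable together with it in some model), then `Γ`
is realized in `[M,ā]`. -/
def OmegaSaturated (M : Model) : Prop :=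
  ∀ (n : ℕ) (α : ℕ → M.U) (Γ : Set FOForm),
    (∃ k : ℕ, ∀ γ ∈ Γ, γ.freeVars ⊆ Finset.range (n + k)) →
    (∃ (N : Model) (β : ℕ → N.U),
      (∀ ψ : FOForm, ψ.freeVars ⊆ Finset.range n → Sat M ψ α → Sat N ψ β) ∧
      ∀ γ ∈ Γ, Sat N γ β) →
    ∃ α' : ℕ → M.U, (∀ i < n, α' i = α i) ∧ ∀ γ ∈ Γ, Sat M γ α'

/-! ### Relativization to a class κ of models. -/

/-- κ(Θ) is first-order axiomatizable for every finite Θ (with R ∈ Θ): for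
every finite set `S` of unary predicate letters there is a set of Θ-sentences
axiomatizing membership in κ. -/
def FinAxiomatizable (κ : Set Model) : Prop :=
  ∀ S : Finset ℕ, ∃ Ax : Set FOForm,
    (∀ ψ ∈ Ax, ψ.freeVars = ∅ ∧ (ψ.predLetters : Set ℕ) ⊆ (S : Set ℕ)) ∧
    ∀ M : Model, M ∈ κ ↔ ∀ ψ ∈ Ax, ∀ α : ℕ → M.U, Sat M ψ α

/-- φ κ-follows from ψ: {ψ, ¬φ} is not κ-satisfiable. -/
def KappaFollows (κ : Set Model) (ψ φ : FOForm) : Prop :=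
  ¬ ∃ M : Model, M ∈ κ ∧ ∃ α : ℕ → M.U, Sat M ψ α ∧ ¬ Sat M φ α

/-- κ-equivalence of formulas. -/
def KappaEquiv (κ : Set Model) (φ ψ : FOForm) : Prop :=
  KappaFollows κ φ ψ ∧ KappaFollows κ ψ φ

/-- φ(x) is κ-invariant with respect to (i,1)-modal asimulations. -/
def KappaInvariantD1 (κ : Set Model) (boxOne : Bool) (x : ℕ) (φ : FOForm) : Prop :=
  ∀ Θ : Set ℕ, (φ.predLetters : Set ℕ) ⊆ Θ →
  ∀ (M₁ M₂ : Model), M₁ ∈ κ → M₂ ∈ κ →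
  ∀ (t : M₁.U) (u : M₂.U)
    (A12 : M₁.U → M₂.U → Prop) (A21 : M₂.U → M₁.U → Prop),
    IsAsimD1 boxOne Θ M₁ M₂ t u A12 A21 →
    ∀ (a : M₁.U) (b : M₂.U), A12 a b → SatAt M₁ a x φ → SatAt M₂ b x φ

/-- φ(x) is κ-invariant with respect to (i,2)-modal asimulations. -/
def KappaInvariantD2 (κ : Set Model) (boxOne : Bool) (x : ℕ) (φ : FOForm) : Prop :=
  ∀ Θ : Set ℕ, (φ.predLetters : Set ℕ) ⊆ Θ →
  ∀ (M₁ M₂ : Model), M₁ ∈ κ → M₂ ∈ κ →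
  ∀ (t : M₁.U) (u : M₂.U)
    (A12 : M₁.U → M₂.U → Prop) (A21 : M₂.U → M₁.U → Prop)
    (B12 : M₁.U → M₂.U → Prop) (B21 : M₂.U → M₁.U → Prop),
    IsAsimD2 boxOne Θ M₁ M₂ t u A12 A21 B12 B21 →
    ∀ (a : M₁.U) (b : M₂.U), A12 a b → SatAt M₁ a x φ → SatAt M₂ b x φ

/-- φ(x) is κ-invariant with respect to (i,j)-modal asimulations
(`diamOne = true` means j = 1). -/
def KappaInvariant (κ : Set Model) (boxOne diamOne : Bool) (x : ℕ) (φ : FOForm) : Prop :=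
  if diamOne then KappaInvariantD1 κ boxOne x φ else KappaInvariantD2 κ boxOne x φ

/-!
The tuples of a `k`-asimulation only count how many moves have been spent, so a `k`-asimulation is
the same as a family of relations `R n` between points, `n` being the number of moves left.

A translation `ST_21(I, x)` is preserved by `R n` as soon as `n` bounds the modal degree of `I`, by
induction on `I`; letters of `I` outside `Θ` are harmless because `φ`, hence its translation, keeps
its truth value when they are made false everywhere.

Conversely, let `L₀` be the set of letters of `φ`, and let `Lₙ₊₁` add to `Lₙ` the formulas
`⋀ X → ⋁ Y`, `□ ⋁ Y` and `◇ ⋀ X` for `X, Y ⊆ Lₙ`. These sets are finite, and the relations "every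
formula of `Lₙ` true at `a` is true at `b`" form such a family. So invariance under `k`-asimulations
makes the truth of `φ` depend monotonically on the `Lₖ`-type of a point, and `φ` is a disjunction of
conjunctions of formulas of `Lₖ`.
-/

section FirstOrder

theorem update_eq_of_eq_on_sdiff {ι X : Type*} [DecidableEq ι] {s : Finset ι} {v : ι} {α β : ι → X}
    (h : ∀ w ∈ s \ {v}, α w = β w) (u : X) :
    ∀ w ∈ s, Function.update α v u w = Function.update β v u w := by
  intro w hw
  by_cases hwv : w = v
  · simp [hwv]
  · simp [hwv, h w (by simp [hw, hwv])]

variable {M : Model} {φ ψ : FOForm} {x : ℕ} {a : M.U}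

theorem sat_congr {α β : ℕ → M.U} (h : ∀ v ∈ φ.freeVars, α v = β v) :
    Sat M φ α ↔ Sat M φ β := by
  induction φ generalizing α β with
  | falsum => exact Iff.rfl
  | pred n v => simp only [Sat, h v (by simp [FOForm.freeVars])]
  | rel s v w =>
    simp only [Sat, h v (by simp [FOForm.freeVars]), h w (by simp [FOForm.freeVars])]
  | conj f g hf hg =>
    exact and_congr (hf fun v hv => h v (Finset.mem_union_left _ hv))
      (hg fun v hv => h v (Finset.mem_union_right _ hv))
  | disj f g hf hg =>
    exact or_congr (hf fun v hv => h v (Finset.mem_union_left _ hv))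
      (hg fun v hv => h v (Finset.mem_union_right _ hv))
  | impl f g hf hg =>
    exact imp_congr (hf fun v hv => h v (Finset.mem_union_left _ hv))
      (hg fun v hv => h v (Finset.mem_union_right _ hv))
  | all v f hf => exact forall_congr' fun u => hf (update_eq_of_eq_on_sdiff h u)
  | ex v f hf => exact exists_congr fun u => hf (update_eq_of_eq_on_sdiff h u)

theorem satAt_iff_sat (hfv : φ.freeVars ⊆ {x}) (α : ℕ → M.U) :
    SatAt M (α x) x φ ↔ Sat M φ α := by
  refine ⟨fun h => h α rfl, fun h β hβ => (sat_congr fun v hv => ?_).2 h⟩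
  rwa [Finset.mem_singleton.1 (hfv hv)]

theorem satAt_congr (h : Equiv φ ψ) : SatAt M a x φ ↔ SatAt M a x ψ :=
  forall₂_congr fun α _ => h M α

/-- The reduct of `M` to the unary letters in `Θ`; as a `Model` interprets every letter, the
others are made false everywhere. -/
def Model.restrict (M : Model) (Θ : Set ℕ) : Model :=
  { M with pred := fun n a => n ∈ Θ ∧ M.pred n a }

theorem sat_restrict_iff {Θ : Set ℕ} (h : (φ.predLetters : Set ℕ) ⊆ Θ) {α : ℕ → M.U} :
    Sat (M.restrict Θ) φ α ↔ Sat M φ α := by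
  induction φ generalizing α with
  | falsum => exact Iff.rfl
  | pred n v => exact and_iff_right (h (by simp [FOForm.predLetters]))
  | rel s v w => cases s <;> exact Iff.rfl
  | conj f g hf hg =>
    simp only [FOForm.predLetters, Finset.coe_union, Set.union_subset_iff] at h
    exact and_congr (hf h.1) (hg h.2)
  | disj f g hf hg =>
    simp only [FOForm.predLetters, Finset.coe_union, Set.union_subset_iff] at h
    exact or_congr (hf h.1) (hg h.2)
  | impl f g hf hg =>
    simp only [FOForm.predLetters, Finset.coe_union, Set.union_subset_iff] at h
    exact imp_congr (hf h.1) (hg h.2)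
  | all v f hf => exact forall_congr' fun u => hf h
  | ex v f hf => exact exists_congr fun u => hf h

theorem satAt_restrict_iff {Θ : Set ℕ} (h : (φ.predLetters : Set ℕ) ⊆ Θ) :
    SatAt (M.restrict Θ) a x φ ↔ SatAt M a x φ :=
  forall₂_congr fun _ _ => sat_restrict_iff h

end FirstOrder

section Forcing

/-- Truth of a modal intuitionistic formula at a point, for the clauses □₂ and ◇₁: the semantics
that `ST_21` expresses in first-order terms. -/
def Forces (M : Model) : MForm → M.U → Prop
  | .bot, _ => False
  | .prop n, a => M.pred n a
  | .conj I J, a => Forces M I a ∧ Forces M J a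
  | .disj I J, a => Forces M I a ∨ Forces M J a
  | .impl I J, a => ∀ c, M.rel a c → Forces M I c → Forces M J c
  | .box I, a => ∀ c, M.rel a c → ∀ e, M.relBox c e → Forces M I e
  | .diam I, a => ∃ c, M.relDiam a c ∧ Forces M I c

variable {M : Model} {I : MForm} {x : ℕ}

theorem sat_ST_iff {α : ℕ → M.U} : Sat M (ST false true I x) α ↔ Forces M I (α x) := by
  induction I generalizing x α with
  | bot => exact Iff.rfl
  | prop n => exact Iff.rfl
  | conj I J hI hJ => exact and_congr hI hJ
  | disj I J hI hJ => exact or_congr hI hJ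
  | impl I J hI hJ => simp [ST, Sat, Forces, hI, hJ, Model.relOf]
  | box I hI => simp [ST, Sat, Forces, hI, Model.relOf]
  | diam I hI => simp [ST, Sat, Forces, hI, Model.relOf]

theorem satAt_ST_iff {a : M.U} : SatAt M a x (ST false true I x) ↔ Forces M I a :=
  ⟨fun h => sat_ST_iff.1 (h (fun _ => a) rfl), fun h _ hα => sat_ST_iff.2 (hα ▸ h)⟩

/-- The number of moves of a (2,1)-modal asimulation needed to evaluate a formula. A `□` counts
twice, since (p-box-2) lengthens tuples by two. -/
def MForm.degree : MForm → ℕ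
  | .bot => 0
  | .prop _ => 0
  | .conj I J => max I.degree J.degree
  | .disj I J => max I.degree J.degree
  | .impl I J => max I.degree J.degree + 1
  | .box I => I.degree + 2
  | .diam I => I.degree + 1

end Forcing

section GradedAsimulation

/-- One direction of a graded form of (2,1)-modal asimulations: `R n` relates points of `N` to
points of `P` with `n` moves left, and `R'` is the family in the other direction. -/
structure IsGradedAsim (Θ : Set ℕ) (N P : Model) (R : ℕ → N.U → P.U → Prop)
    (R' : ℕ → P.U → N.U → Prop) : Prop where
  base : ∀ {n a b}, R n a b → ∀ p ∈ Θ, N.pred p a → P.pred p b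
  step : ∀ {n a b d}, R (n + 1) a b → P.rel b d → ∃ c, N.rel a c ∧ R n c d ∧ R' n d c
  box : ∀ {n a b d f}, R (n + 2) a b → P.rel b d → P.relBox d f →
    ∃ c e, N.rel a c ∧ N.relBox c e ∧ R n e f
  diam : ∀ {n a b c}, R (n + 1) a b → N.relDiam a c → ∃ d, P.relDiam b d ∧ R n c d

/-- The relation between last entries that a relation between tuples induces on those with `n` of
`k` moves left. A tuple of length `m + 1` has spent `m` moves. -/
def lastRel {α β : Type*} (k : ℕ) (A : List α → List β → Prop) (n : ℕ) (a : α) (b : β) : Prop :=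
  ∃ as bs, as.length + n = k ∧ A (as ++ [a]) (bs ++ [b])

/-- The relation between tuples of equal length that compares their last entries by `R n`, where
`n` is the number of moves left out of `k`; tuples with more than `k` moves are compared by
`R 0`. -/
def tupleRel {α β : Type*} (k : ℕ) (R : ℕ → α → β → Prop) (as : List α) (bs : List β) : Prop :=
  as.length = bs.length ∧ ∃ a ∈ as.getLast?, ∃ b ∈ bs.getLast?, R (k + 1 - as.length) a b

theorem tupleRel_append_singleton {α β : Type*} {k : ℕ} {R : ℕ → α → β → Prop} {as : List α}
    {bs : List β} {a : α} {b : β} :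
    tupleRel k R (as ++ [a]) (bs ++ [b]) ↔ as.length = bs.length ∧ R (k - as.length) a b := by
  simp [tupleRel]

theorem tupleRel_singleton {α β : Type*} {k : ℕ} {R : ℕ → α → β → Prop} {a : α} {b : β} :
    tupleRel k R [a] [b] ↔ R k a b := by
  simp [tupleRel]

variable {N P : Model} {Θ : Set ℕ} {k : ℕ}

theorem isGradedAsim_lastRel {A : List N.U → List P.U → Prop} {A' : List P.U → List N.U → Prop}
    (type : TypeCond N P A) (base : BaseCond N P Θ A) (step : StepCond N P k A A')
    (box : Box2Cond N P k A) (diam : Diam1Cond N P k A) :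
    IsGradedAsim Θ N P (lastRel k A) (lastRel k A') where
  base := fun ⟨as, bs, _, hA⟩ => base as bs _ _ hA
  step := by
    rintro n a b d ⟨as, bs, hk, hA⟩ hbd
    have hlen : as.length = bs.length := by simpa using (type _ _ hA).2
    obtain ⟨c, hac, hcd, hdc⟩ := step as bs a b d hA hbd (by omega)
    exact ⟨c, hac, ⟨as ++ [a], bs ++ [b], by grind, by simpa using hcd⟩,
      ⟨bs ++ [b], as ++ [a], by grind, by simpa using hdc⟩⟩
  box := by
    rintro n a b d f ⟨as, bs, hk, hA⟩ hbd hdf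
    obtain ⟨c, e, hac, hce, hef⟩ := box as bs a b d f hA hbd hdf (by omega)
    exact ⟨c, e, hac, hce, as ++ [a, c], bs ++ [b, d], by grind, by simpa using hef⟩
  diam := by
    rintro n a b c ⟨as, bs, hk, hA⟩ hac
    obtain ⟨d, hbd, hcd⟩ := diam as bs a c b hA hac (by omega)
    exact ⟨d, hbd, as ++ [a], bs ++ [b], by grind, by simpa using hcd⟩

theorem typeCond_tupleRel (R : ℕ → N.U → P.U → Prop) : TypeCond N P (tupleRel k R) := by
  rintro as bs ⟨hlen, a, ha, -⟩
  exact ⟨List.ne_nil_of_mem (List.mem_of_getLast? ha), hlen⟩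

namespace IsGradedAsim

variable {R : ℕ → N.U → P.U → Prop} {R' : ℕ → P.U → N.U → Prop}

theorem baseCond_tupleRel (h : IsGradedAsim Θ N P R R') : BaseCond N P Θ (tupleRel k R) :=
  fun _ _ _ _ hA => h.base (tupleRel_append_singleton.1 hA).2

theorem stepCond_tupleRel (h : IsGradedAsim Θ N P R R') :
    StepCond N P k (tupleRel k R) (tupleRel k R') := by
  intro as bs a b d hA hbd hk
  obtain ⟨hlen, hab⟩ := tupleRel_append_singleton.1 hA
  obtain ⟨n, hn⟩ : ∃ n, k - as.length = n + 1 := ⟨k - as.length - 1, by omega⟩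
  obtain ⟨c, hac, hcd, hdc⟩ := h.step (hn ▸ hab) hbd
  have hcd' : tupleRel k R (as ++ [a] ++ [c]) (bs ++ [b] ++ [d]) :=
    tupleRel_append_singleton.2 (by grind)
  have hdc' : tupleRel k R' (bs ++ [b] ++ [d]) (as ++ [a] ++ [c]) :=
    tupleRel_append_singleton.2 (by grind)
  exact ⟨c, hac, by simpa using hcd', by simpa using hdc'⟩

theorem box2Cond_tupleRel (h : IsGradedAsim Θ N P R R') : Box2Cond N P k (tupleRel k R) := by
  intro as bs a b d f hA hbd hdf hk
  obtain ⟨hlen, hab⟩ := tupleRel_append_singleton.1 hA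
  obtain ⟨n, hn⟩ : ∃ n, k - as.length = n + 2 := ⟨k - as.length - 2, by omega⟩
  obtain ⟨c, e, hac, hce, hef⟩ := h.box (hn ▸ hab) hbd hdf
  have hef' : tupleRel k R (as ++ [a, c] ++ [e]) (bs ++ [b, d] ++ [f]) :=
    tupleRel_append_singleton.2 (by grind)
  exact ⟨c, e, hac, hce, by simpa using hef'⟩

theorem diam1Cond_tupleRel (h : IsGradedAsim Θ N P R R') : Diam1Cond N P k (tupleRel k R) := by
  intro as bs a c b hA hac hk
  obtain ⟨hlen, hab⟩ := tupleRel_append_singleton.1 hA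
  obtain ⟨n, hn⟩ : ∃ n, k - as.length = n + 1 := ⟨k - as.length - 1, by omega⟩
  obtain ⟨d, hbd, hcd⟩ := h.diam (hn ▸ hab) hac
  have hcd' : tupleRel k R (as ++ [a] ++ [c]) (bs ++ [b] ++ [d]) :=
    tupleRel_append_singleton.2 (by grind)
  exact ⟨d, hbd, by simpa using hcd'⟩

theorem isKAsimD1_tupleRel (h : IsGradedAsim Θ N P R R') (h' : IsGradedAsim Θ P N R' R)
    {t : N.U} {u : P.U} (htu : R k t u) :
    IsKAsimD1 false Θ N P t u k (tupleRel k R) (tupleRel k R') :=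
  ⟨typeCond_tupleRel R, typeCond_tupleRel R',
    tupleRel_singleton.2 htu, h.baseCond_tupleRel, h'.baseCond_tupleRel,
    h.stepCond_tupleRel, h'.stepCond_tupleRel,
    And.intro h.box2Cond_tupleRel h'.box2Cond_tupleRel,
    h.diam1Cond_tupleRel, h'.diam1Cond_tupleRel⟩

theorem forces_restrict (h : IsGradedAsim Θ N P R R') (h' : IsGradedAsim Θ P N R' R) {I : MForm}
    {n : ℕ} (hn : I.degree ≤ n) {a : N.U} {b : P.U} (hab : R n a b)
    (ha : Forces (N.restrict Θ) I a) : Forces (P.restrict Θ) I b := by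
  induction I generalizing N P R R' n a b with
  | bot => exact ha
  | prop p => exact ⟨ha.1, h.base hab p ha.1 ha.2⟩
  | conj I J hI hJ =>
    obtain ⟨hnI, hnJ⟩ := max_le_iff.1 hn
    exact ha.imp (hI h h' hnI hab) (hJ h h' hnJ hab)
  | disj I J hI hJ =>
    obtain ⟨hnI, hnJ⟩ := max_le_iff.1 hn
    exact ha.imp (hI h h' hnI hab) (hJ h h' hnJ hab)
  | impl I J hI hJ =>
    intro d hbd hd
    obtain ⟨m, rfl⟩ := Nat.exists_eq_add_of_le' (le_of_add_le_right hn)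
    obtain ⟨hmI, hmJ⟩ := max_le_iff.1 (Nat.le_of_add_le_add_right hn)
    obtain ⟨c, hac, hcd, hdc⟩ := h.step hab hbd
    exact hJ h h' hmJ hcd (ha c hac (hI h' h hmI hdc hd))
  | box I hI =>
    intro d hbd f hdf
    obtain ⟨m, rfl⟩ := Nat.exists_eq_add_of_le' (le_of_add_le_right hn)
    obtain ⟨c, e, hac, hce, hef⟩ := h.box hab hbd hdf
    exact hI h h' (Nat.le_of_add_le_add_right hn) hef (ha c hac e hce)
  | diam I hI =>
    obtain ⟨c, hac, hc⟩ := ha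
    obtain ⟨m, rfl⟩ := Nat.exists_eq_add_of_le' (le_of_add_le_right hn)
    obtain ⟨d, hbd, hcd⟩ := h.diam hab hac
    exact ⟨d, hbd, hI h h' (Nat.le_of_add_le_add_right hn) hcd hc⟩

end IsGradedAsim

theorem kInvariantD1_false_iff {x : ℕ} {φ : FOForm} :
    KInvariantD1 false x φ k ↔
      ∀ Θ : Set ℕ, (φ.predLetters : Set ℕ) ⊆ Θ → ∀ (N P : Model) (R : ℕ → N.U → P.U → Prop)
        (R' : ℕ → P.U → N.U → Prop), IsGradedAsim Θ N P R R' → IsGradedAsim Θ P N R' R →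
        ∀ (a : N.U) (b : P.U), R k a b → SatAt N a x φ → SatAt P b x φ := by
  constructor
  · intro hφ Θ hΘ N P R R' h h' a b hab
    exact hφ Θ hΘ N P a b _ _ (h.isKAsimD1_tupleRel h' hab) a b (tupleRel_singleton.2 hab)
  · rintro hφ Θ hΘ N P t u A A'
      ⟨type, type', -, base, base', step, step', box, diam, diam'⟩ a b hab
    have box : Box2Cond N P k A ∧ Box2Cond P N k A' := box
    exact hφ Θ hΘ N P (lastRel k A) (lastRel k A')
      (isGradedAsim_lastRel type base step box.1 diam)
      (isGradedAsim_lastRel type' base' step' box.2 diam') a b ⟨[], [], Nat.zero_add k, hab⟩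

end GradedAsimulation

section Types

/-- The conjunction of a finite set of formulas; `⊥ → ⊥` stands for the empty one. -/
noncomputable def bigConj (X : Finset MForm) : MForm :=
  X.toList.foldr .conj (.impl .bot .bot)

/-- The disjunction of a finite set of formulas. -/
noncomputable def bigDisj (X : Finset MForm) : MForm :=
  X.toList.foldr .disj .bot

theorem forces_bigConj_iff {M : Model} {X : Finset MForm} {a : M.U} :
    Forces M (bigConj X) a ↔ ∀ I ∈ X, Forces M I a := by
  simp only [bigConj, ← Finset.mem_toList]
  induction X.toList with
  | nil => simp [Forces]
  | cons I l ih => simp [Forces, ih]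

theorem forces_bigDisj_iff {M : Model} {X : Finset MForm} {a : M.U} :
    Forces M (bigDisj X) a ↔ ∃ I ∈ X, Forces M I a := by
  simp only [bigDisj, ← Finset.mem_toList]
  induction X.toList with
  | nil => simp [Forces]
  | cons I l ih => simp [Forces, ih]

open scoped Classical in
/-- The conjunctions of subsets of `L`. -/
noncomputable def conjunctions (L : Finset MForm) : Finset MForm :=
  L.powerset.image bigConj

open scoped Classical in
/-- The disjunctions of subsets of `L`. -/
noncomputable def disjunctions (L : Finset MForm) : Finset MForm :=
  L.powerset.image bigDisj

/-- Inclusion of the `L`-type of `a` in that of `b`: every formula of `L` true at `a` is true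
at `b`. -/
def TypeLE (L : Finset MForm) (N P : Model) (a : N.U) (b : P.U) : Prop :=
  ∀ I ∈ L, Forces N I a → Forces P I b

theorem typeLE_refl (L : Finset MForm) (M : Model) (a : M.U) : TypeLE L M M a a :=
  fun _ _ h => h

open scoped Classical in
/-- The conjunction of the formulas of `L` true at `a`; its models are the points whose `L`-type
includes that of `a`. -/
noncomputable def posDiagram (L : Finset MForm) (M : Model) (a : M.U) : MForm :=
  bigConj {I ∈ L | Forces M I a}

open scoped Classical in
/-- The disjunction of the formulas of `L` false at `a`; it fails exactly at the points whose
`L`-type is included in that of `a`. -/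
noncomputable def negDiagram (L : Finset MForm) (M : Model) (a : M.U) : MForm :=
  bigDisj {I ∈ L | ¬ Forces M I a}

variable {L : Finset MForm} {N P : Model}

theorem forces_posDiagram_iff {a : N.U} {b : P.U} :
    Forces P (posDiagram L N a) b ↔ TypeLE L N P a b := by
  simp [posDiagram, forces_bigConj_iff, TypeLE]

theorem forces_negDiagram_iff {a : N.U} {b : P.U} :
    Forces N (negDiagram L P b) a ↔ ¬ TypeLE L N P a b := by
  simp only [negDiagram, forces_bigDisj_iff, TypeLE, Finset.mem_filter]
  grind

theorem posDiagram_mem (L : Finset MForm) (M : Model) (a : M.U) :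
    posDiagram L M a ∈ conjunctions L := by
  classical exact Finset.mem_image_of_mem _ (Finset.mem_powerset.2 (Finset.filter_subset ..))

theorem negDiagram_mem (L : Finset MForm) (M : Model) (a : M.U) :
    negDiagram L M a ∈ disjunctions L := by
  classical exact Finset.mem_image_of_mem _ (Finset.mem_powerset.2 (Finset.filter_subset ..))

open scoped Classical in
theorem exists_forces_iff_of_typeLE (C : ∀ M : Model, M.U → Prop)
    (hC : ∀ (N P : Model) (a : N.U) (b : P.U), TypeLE L N P a b → C N a → C P b) :
    ∃ I : MForm, ∀ (M : Model) (a : M.U), Forces M I a ↔ C M a := by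
  refine ⟨bigDisj {J ∈ conjunctions L | ∀ M a, Forces M J a → C M a}, fun M a => ?_⟩
  rw [forces_bigDisj_iff]
  constructor
  · rintro ⟨J, hJ, ha⟩
    exact (Finset.mem_filter.1 hJ).2 M a ha
  · intro ha
    refine ⟨posDiagram L M a, Finset.mem_filter.2 ⟨posDiagram_mem L M a, fun P b hb => ?_⟩,
      forces_posDiagram_iff.2 (typeLE_refl L M a)⟩
    exact hC M P a b (forces_posDiagram_iff.1 hb) ha

open scoped Classical in
/-- The formulas of `L` together with those that test one move of an asimulation between points
compared by their `L`-types. -/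
noncomputable def modalStep (L : Finset MForm) : Finset MForm :=
  L ∪ Finset.image₂ .impl (conjunctions L) (disjunctions L) ∪ (disjunctions L).image .box ∪
    (conjunctions L).image .diam

theorem TypeLE.of_modalStep {a : N.U} {b : P.U} (h : TypeLE (modalStep L) N P a b) :
    TypeLE L N P a b :=
  fun I hI => h I (by simp [modalStep, hI])

theorem TypeLE.exists_rel {a : N.U} {b d : P.U} (h : TypeLE (modalStep L) N P a b)
    (hbd : P.rel b d) : ∃ c, N.rel a c ∧ TypeLE L N P c d ∧ TypeLE L P N d c := by
  by_contra! hc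
  have ha : Forces N (.impl (posDiagram L P d) (negDiagram L P d)) a := fun c hac hdc =>
    forces_negDiagram_iff.2 fun hcd => hc c hac hcd (forces_posDiagram_iff.1 hdc)
  have hb := h _ (by simp [modalStep, posDiagram_mem, negDiagram_mem]) ha
  exact forces_negDiagram_iff.1
    (hb d hbd (forces_posDiagram_iff.2 (typeLE_refl L P d))) (typeLE_refl L P d)

theorem TypeLE.exists_relBox {a : N.U} {b d f : P.U} (h : TypeLE (modalStep L) N P a b)
    (hbd : P.rel b d) (hdf : P.relBox d f) :
    ∃ c e, N.rel a c ∧ N.relBox c e ∧ TypeLE L N P e f := by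
  by_contra! hc
  have ha : Forces N (.box (negDiagram L P f)) a := fun c hac e hce =>
    forces_negDiagram_iff.2 (hc c e hac hce)
  have hb := h _ (by simp [modalStep, negDiagram_mem]) ha
  exact forces_negDiagram_iff.1 (hb d hbd f hdf) (typeLE_refl L P f)

theorem TypeLE.exists_relDiam {a c : N.U} {b : P.U} (h : TypeLE (modalStep L) N P a b)
    (hac : N.relDiam a c) : ∃ d, P.relDiam b d ∧ TypeLE L N P c d := by
  have ha : Forces N (.diam (posDiagram L N c)) a :=
    ⟨c, hac, forces_posDiagram_iff.2 (typeLE_refl L N c)⟩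
  obtain ⟨d, hbd, hd⟩ := h _ (by simp [modalStep, posDiagram_mem]) ha
  exact ⟨d, hbd, forces_posDiagram_iff.1 hd⟩

open scoped Classical in
/-- Finite sets of formulas over the letters `S` whose types determine how far points can be
followed by an asimulation with `n` moves left. -/
noncomputable def level (S : Finset ℕ) : ℕ → Finset MForm
  | 0 => S.image .prop
  | n + 1 => modalStep (level S n)

theorem prop_mem_level {S : Finset ℕ} {p : ℕ} (hp : p ∈ S) (n : ℕ) : .prop p ∈ level S n := by
  induction n with
  | zero => simp [level, hp]
  | succ n ih => simp [level, modalStep, ih]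

theorem isGradedAsim_typeLE_level (S : Finset ℕ) (N P : Model) :
    IsGradedAsim S N P (fun n => TypeLE (level S n) N P) (fun n => TypeLE (level S n) P N) where
  base := fun h p hp => h (.prop p) (prop_mem_level hp _)
  step := TypeLE.exists_rel
  box := fun h hbd hdf => h.of_modalStep.exists_relBox hbd hdf
  diam := TypeLE.exists_relDiam

end Types

section Characterization

variable {x : ℕ} {φ : FOForm}

theorem kInvariantD1_degree_of_equiv_ST {I : MForm} (hI : Equiv φ (ST false true I x)) :
    KInvariantD1 false x φ I.degree := by
  rw [kInvariantD1_false_iff]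
  intro Θ hΘ N P R R' h h' a b hab
  have satAt_iff_forces (M : Model) (c : M.U) : SatAt M c x φ ↔ Forces (M.restrict Θ) I c :=
    (satAt_restrict_iff hΘ).symm.trans ((satAt_congr hI).trans satAt_ST_iff)
  rw [satAt_iff_forces, satAt_iff_forces]
  exact h.forces_restrict h' le_rfl hab

theorem exists_equiv_ST_of_kInvariantD1 (hfv : φ.freeVars ⊆ {x}) {k : ℕ}
    (hk : KInvariantD1 false x φ k) : ∃ I : MForm, Equiv φ (ST false true I x) := by
  have satAt_mono (N P : Model) (a : N.U) (b : P.U)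
      (hab : TypeLE (level φ.predLetters k) N P a b) : SatAt N a x φ → SatAt P b x φ :=
    kInvariantD1_false_iff.1 hk _ subset_rfl N P _ _ (isGradedAsim_typeLE_level _ N P)
      (isGradedAsim_typeLE_level _ P N) a b hab
  obtain ⟨I, hI⟩ := exists_forces_iff_of_typeLE (fun M a => SatAt M a x φ) satAt_mono
  exact ⟨I, fun M α => (satAt_iff_sat hfv α).symm.trans ((hI M (α x)).symm.trans sat_ST_iff.symm)⟩

end Characterization

/-- **Theorem 1, case (i,j) = (2,1).**  φ(x) is logically equivalent to the
(2,1)-standard x-translation of a modal intuitionistic formula iff there is a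
k ∈ ℕ such that φ(x) is invariant with respect to (2,1)-modal k-asimulations. -/
theorem statement_1 (x : ℕ) (φ : FOForm) (hfv : φ.freeVars ⊆ {x}) :
    (∃ I : MForm, Equiv φ (ST false true I x)) ↔
    (∃ k : ℕ, KInvariantD1 false x φ k) := by
  constructor
  · rintro ⟨I, hI⟩
    exact ⟨I.degree, kInvariantD1_degree_of_equiv_ST hI⟩
  · rintro ⟨k, hk⟩
    exact exists_equiv_ST_of_kInvariantD1 hfv hk

end ModalIntAsim
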